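/- arXiv:1111.1246 — 5 statements merged into one kernel-verified Lean document; each statement's English description precedes it below -/
import Mathlib

section
/- For all reals α1, α2, α3 with C(α1, α2, α3) = 0, one has (5 − √5)/2 ≤ I(α1, α2, α3) ≤ (5 + √5)/2. Moreover both bounds are attained on the constraint surface: C(3π/5, −π/5, π) = 0 with I(3π/5, −π/5, π) = (5 − √5)/2 (the regular pentagram), and C(π/5, 3π/5, π) = 0 with I(π/5, 3π/5, π) = (5 + √5)/2 (the regular convex pentagon). -/
open Real

/-- The shape-space constraint function in `α`-coordinates. -/
noncomputable def Cα (a1 a2 a3 : ℝ) : ℝ :=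
  3 + 4 * Real.cos a1 * Real.cos a2 + 4 * Real.cos a1 * Real.cos a3
    + 4 * Real.cos a2 * Real.cos a3

/-- The moment of inertia in `α`-coordinates. -/
noncomputable def Iα (a1 a2 a3 : ℝ) : ℝ :=
  4 + 2 * Real.cos a1 * Real.cos a2 + (8 / 5) * Real.cos a1 * Real.cos a3
    + (12 / 5) * Real.cos a2 * Real.cos a3 + (6 / 5) * Real.sin a1 * Real.sin a2

/-!
`Iα` is the moment of inertia, about the centroid, of unit masses at the vertices of a closed planar
pentagon whose first four sides are unit vectors; hence `5 * Iα` is the sum of the squares of its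
sides and diagonals. The equation `Cα = 0` says that the fifth side has unit length as well.
For the sides `v i` of a closed pentagon in any inner product space and a root `x` of
`x ^ 2 = x + 1`, the sum of the squares `‖v (i - 1) + v (i + 1) + x • v i‖ ^ 2` is a combination of
the sum of squared sides and the sum of squared diagonals. Its nonnegativity bounds their ratio from
below when `x` is the golden ratio `φ`, and from above when `x` is its conjugate `ψ`.
-/

open scoped RealInnerProductSpace goldenRatio

section Autocorrelation

variable {G E : Type*} [Fintype G] [NormedAddCommGroup E]

lemma sum_norm_sq_translate [AddGroup G] (v : G → E) (g : G) :
    ∑ x, ‖v (x + g)‖ ^ 2 = ∑ x, ‖v x‖ ^ 2 :=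
  Equiv.sum_comp (Equiv.addRight g) fun x ↦ ‖v x‖ ^ 2

variable [InnerProductSpace ℝ E]

/-- The autocorrelation of a vector-valued function on a finite group: its inner product with its
translate by `g`. For the cyclic sequence of sides of a closed polygon it records the inner products
of sides that are `g` steps apart. -/
def autocorrelation [Add G] (v : G → E) (g : G) : ℝ := ∑ x, ⟪v x, v (x + g)⟫

variable [AddGroup G] (v : G → E)

lemma autocorrelation_zero : autocorrelation v 0 = ∑ x, ‖v x‖ ^ 2 := by
  simp [autocorrelation]

lemma autocorrelation_neg (g : G) : autocorrelation v (-g) = autocorrelation v g := by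
  unfold autocorrelation
  rw [← Equiv.sum_comp (Equiv.addRight g)]
  simp [real_inner_comm]

lemma sum_autocorrelation : ∑ g, autocorrelation v g = ‖∑ x, v x‖ ^ 2 := by
  calc ∑ g, autocorrelation v g
      = ∑ x, ∑ g, ⟪v x, v (x + g)⟫ := Finset.sum_comm
    _ = ∑ x, ∑ y, ⟪v x, v y⟫ :=
        Finset.sum_congr rfl fun x _ ↦ Equiv.sum_comp (Equiv.addLeft x) fun y ↦ ⟪v x, v y⟫
    _ = ‖∑ x, v x‖ ^ 2 := by
        simp only [← real_inner_self_eq_norm_sq, sum_inner, inner_sum, real_inner_comm]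

lemma sum_norm_sq_add_translate (g : G) :
    ∑ x, ‖v x + v (x + g)‖ ^ 2 = 2 * ∑ x, ‖v x‖ ^ 2 + 2 * autocorrelation v g := by
  simp only [norm_add_sq_real, Finset.sum_add_distrib, ← Finset.mul_sum, sum_norm_sq_translate,
    autocorrelation]
  ring

lemma sum_norm_sq_translates_add_smul (g : G) (c : ℝ) :
    ∑ x, ‖v (x - g) + v (x + g) + c • v x‖ ^ 2 =
      (2 + c ^ 2) * ∑ x, ‖v x‖ ^ 2 + 4 * c * autocorrelation v g
        + 2 * autocorrelation v (g + g) := by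
  have h_norm_prev : ∑ x, ‖v (x - g)‖ ^ 2 = ∑ x, ‖v x‖ ^ 2 := by
    simpa only [sub_eq_add_neg] using sum_norm_sq_translate v (-g)
  have h_prev : ∑ x, ⟪v (x - g), v x⟫ = autocorrelation v g := by
    rw [← autocorrelation_neg]
    simp only [autocorrelation, sub_eq_add_neg, real_inner_comm]
  have h_next : ∑ x, ⟪v (x + g), v x⟫ = autocorrelation v g := by
    simp only [autocorrelation, real_inner_comm]
  have h_across : ∑ x, ⟪v (x - g), v (x + g)⟫ = autocorrelation v (g + g) := by
    rw [← Equiv.sum_comp (Equiv.addRight g)]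
    simp [autocorrelation, add_assoc]
  simp only [norm_add_sq_real, inner_add_left, real_inner_smul_right, norm_smul, mul_pow,
    norm_eq_abs, sq_abs, Finset.sum_add_distrib, ← Finset.mul_sum]
  rw [h_norm_prev, sum_norm_sq_translate, h_prev, h_next, h_across]
  ring

end Autocorrelation

section ClosedPentagon

variable {E : Type*} [NormedAddCommGroup E] [InnerProductSpace ℝ E] {v : Fin 5 → E}

lemma sum_norm_sq_add_autocorrelation_eq_zero (hv : ∑ i, v i = 0) :
    ∑ i, ‖v i‖ ^ 2 + 2 * autocorrelation v 1 + 2 * autocorrelation v 2 = 0 := by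
  have h_sum := sum_autocorrelation v
  -- In `Fin 5`, `3 = -2` and `4 = -1`.
  have h_three : autocorrelation v 3 = autocorrelation v 2 := autocorrelation_neg v 2
  have h_four : autocorrelation v 4 = autocorrelation v 1 := autocorrelation_neg v 1
  rw [hv, norm_zero, Fin.sum_univ_five, autocorrelation_zero, h_three, h_four] at h_sum
  linarith

lemma sum_norm_sq_neighbors_add_smul (hv : ∑ i, v i = 0) {x : ℝ} (hx : x ^ 2 = x + 1) :
    ∑ i, ‖v (i - 1) + v (i + 1) + x • v i‖ ^ 2 =
      (2 * x - 1) * (∑ i, ‖v i + v (i + 1)‖ ^ 2 - (1 - x) ^ 2 * ∑ i, ‖v i‖ ^ 2) := by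
  have h_closed := sum_norm_sq_add_autocorrelation_eq_zero hv
  have h_two : (1 + 1 : Fin 5) = 2 := rfl
  rw [sum_norm_sq_translates_add_smul, sum_norm_sq_add_translate, h_two]
  linear_combination h_closed + (2 * x - 2) * (∑ i, ‖v i‖ ^ 2) * hx

theorem goldenConj_sq_mul_sum_side_sq_le_sum_diagonal_sq (hv : ∑ i, v i = 0) :
    ψ ^ 2 * ∑ i, ‖v i‖ ^ 2 ≤ ∑ i, ‖v i + v (i + 1)‖ ^ 2 := by
  have h_sq := sum_norm_sq_neighbors_add_smul hv goldenRatio_sq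
  have h_nonneg : 0 ≤ ∑ i, ‖v (i - 1) + v (i + 1) + φ • v i‖ ^ 2 := by positivity
  rw [h_sq, one_sub_goldenConj] at h_nonneg
  have h_pos : 0 < 2 * φ - 1 := by linarith [one_lt_goldenRatio]
  exact sub_nonneg.mp (nonneg_of_mul_nonneg_right h_nonneg h_pos)

theorem sum_diagonal_sq_le_goldenRatio_sq_mul_sum_side_sq (hv : ∑ i, v i = 0) :
    ∑ i, ‖v i + v (i + 1)‖ ^ 2 ≤ φ ^ 2 * ∑ i, ‖v i‖ ^ 2 := by
  have h_sq := sum_norm_sq_neighbors_add_smul hv goldenConj_sq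
  have h_nonneg : 0 ≤ ∑ i, ‖v (i - 1) + v (i + 1) + ψ • v i‖ ^ 2 := by positivity
  rw [h_sq, one_sub_goldenRatio] at h_nonneg
  have h_neg : 2 * ψ - 1 < 0 := by linarith [goldenConj_neg]
  exact sub_nonpos.mp (nonpos_of_mul_nonneg_right h_nonneg h_neg)

end ClosedPentagon

lemma inner_exp_mul_I (s t : ℝ) :
    ⟪Complex.exp (s * Complex.I), Complex.exp (t * Complex.I)⟫ = cos (s - t) := by
  rw [Complex.inner, Complex.mul_re, Complex.conj_re, Complex.conj_im, Complex.exp_ofReal_mul_I_re,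
    Complex.exp_ofReal_mul_I_re, Complex.exp_ofReal_mul_I_im, Complex.exp_ofReal_mul_I_im, cos_sub]
  ring

/-- The directions of the first four sides of the pentagon with coordinates `a1, a2, a3`. The frame
is rotated so that the coordinates are themselves the directions of three sides. -/
def sideDirection (a1 a2 a3 : ℝ) : Fin 4 → ℝ := ![a1 + a2 + a3, a1, a2, a3]

/-- The first four sides of the pentagon with coordinates `a1, a2, a3`, as unit vectors in `ℂ`. -/
noncomputable def unitSide (a1 a2 a3 : ℝ) (j : Fin 4) : ℂ :=
  Complex.exp (sideDirection a1 a2 a3 j * Complex.I)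

/-- The sides, as vectors in `ℂ`, of the pentagon with coordinates `a1, a2, a3`. The last side is
chosen so that the pentagon closes up; it has unit length only on the surface `Cα = 0`. -/
noncomputable def pentagonSide (a1 a2 a3 : ℝ) : Fin 5 → ℂ :=
  Fin.snoc (α := fun _ ↦ ℂ) (unitSide a1 a2 a3) (-∑ j, unitSide a1 a2 a3 j)

section PentagonSide

variable (a1 a2 a3 : ℝ)

lemma norm_unitSide (j : Fin 4) : ‖unitSide a1 a2 a3 j‖ = 1 :=
  Complex.norm_exp_ofReal_mul_I _

lemma inner_unitSide (j k : Fin 4) :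
    ⟪unitSide a1 a2 a3 j, unitSide a1 a2 a3 k⟫ =
      cos (sideDirection a1 a2 a3 j - sideDirection a1 a2 a3 k) :=
  inner_exp_mul_I _ _

lemma inner_unitSide_zero_one : ⟪unitSide a1 a2 a3 0, unitSide a1 a2 a3 1⟫ = cos (a2 + a3) :=
  (inner_unitSide a1 a2 a3 0 1).trans <| congrArg cos <|
    show a1 + a2 + a3 - a1 = a2 + a3 by ring

lemma inner_unitSide_zero_two : ⟪unitSide a1 a2 a3 0, unitSide a1 a2 a3 2⟫ = cos (a1 + a3) :=
  (inner_unitSide a1 a2 a3 0 2).trans <| congrArg cos <|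
    show a1 + a2 + a3 - a2 = a1 + a3 by ring

lemma inner_unitSide_zero_three : ⟪unitSide a1 a2 a3 0, unitSide a1 a2 a3 3⟫ = cos (a1 + a2) :=
  (inner_unitSide a1 a2 a3 0 3).trans <| congrArg cos <|
    show a1 + a2 + a3 - a3 = a1 + a2 by ring

lemma inner_unitSide_one_two : ⟪unitSide a1 a2 a3 1, unitSide a1 a2 a3 2⟫ = cos (a1 - a2) :=
  inner_unitSide a1 a2 a3 1 2

lemma inner_unitSide_one_three : ⟪unitSide a1 a2 a3 1, unitSide a1 a2 a3 3⟫ = cos (a1 - a3) :=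
  inner_unitSide a1 a2 a3 1 3

lemma inner_unitSide_two_three : ⟪unitSide a1 a2 a3 2, unitSide a1 a2 a3 3⟫ = cos (a2 - a3) :=
  inner_unitSide a1 a2 a3 2 3

lemma norm_sum_unitSide_sq : ‖∑ j, unitSide a1 a2 a3 j‖ ^ 2 = 1 + Cα a1 a2 a3 := by
  simp only [Fin.sum_univ_four, norm_add_sq_real, inner_add_left, norm_unitSide,
    inner_unitSide_zero_one, inner_unitSide_zero_two, inner_unitSide_zero_three,
    inner_unitSide_one_two, inner_unitSide_one_three, inner_unitSide_two_three, cos_add, cos_sub]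
  unfold Cα
  ring

lemma sum_pentagonSide : ∑ i, pentagonSide a1 a2 a3 i = 0 := by
  rw [Fin.sum_univ_castSucc]
  simp only [pentagonSide, Fin.snoc_castSucc, Fin.snoc_last, add_neg_cancel]

lemma sum_norm_sq_pentagonSide : ∑ i, ‖pentagonSide a1 a2 a3 i‖ ^ 2 = 5 + Cα a1 a2 a3 := by
  rw [Fin.sum_univ_castSucc]
  simp only [pentagonSide, Fin.snoc_castSucc, Fin.snoc_last, norm_neg, norm_sum_unitSide_sq,
    norm_unitSide, one_pow, Finset.sum_const, Finset.card_univ, Fintype.card_fin]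
  ring

lemma sum_norm_sq_diagonal_pentagonSide :
    ∑ i, ‖pentagonSide a1 a2 a3 i + pentagonSide a1 a2 a3 (i + 1)‖ ^ 2 =
      12 + 6 * cos a1 * cos a2 + 4 * cos a1 * cos a3 + 8 * cos a2 * cos a3
        + 6 * sin a1 * sin a2 := by
  set u := unitSide a1 a2 a3 with hu
  have h_three : pentagonSide a1 a2 a3 3 + pentagonSide a1 a2 a3 4 = -(u 0 + u 1 + u 2) := by
    change u 3 + -∑ j, u j = _
    rw [Fin.sum_univ_four]
    ring
  have h_four : pentagonSide a1 a2 a3 4 + pentagonSide a1 a2 a3 0 = -(u 1 + u 2 + u 3) := by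
    change -∑ j, u j + u 0 = _
    rw [Fin.sum_univ_four]
    ring
  calc ∑ i, ‖pentagonSide a1 a2 a3 i + pentagonSide a1 a2 a3 (i + 1)‖ ^ 2
      = ‖u 0 + u 1‖ ^ 2 + ‖u 1 + u 2‖ ^ 2 + ‖u 2 + u 3‖ ^ 2
          + ‖u 0 + u 1 + u 2‖ ^ 2 + ‖u 1 + u 2 + u 3‖ ^ 2 := by
        rw [← norm_neg (u 0 + u 1 + u 2), ← norm_neg (u 1 + u 2 + u 3), ← h_three, ← h_four,
          Fin.sum_univ_five]
        rfl
    _ = 12 + 6 * cos a1 * cos a2 + 4 * cos a1 * cos a3 + 8 * cos a2 * cos a3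
          + 6 * sin a1 * sin a2 := by
        simp only [hu, norm_add_sq_real, inner_add_left, norm_unitSide, inner_unitSide_zero_one,
          inner_unitSide_zero_two, inner_unitSide_one_two, inner_unitSide_one_three,
          inner_unitSide_two_three, cos_add, cos_sub]
        ring

lemma five_mul_Iα :
    5 * Iα a1 a2 a3 = ∑ i, ‖pentagonSide a1 a2 a3 i‖ ^ 2
      + ∑ i, ‖pentagonSide a1 a2 a3 i + pentagonSide a1 a2 a3 (i + 1)‖ ^ 2 := by
  rw [sum_norm_sq_pentagonSide, sum_norm_sq_diagonal_pentagonSide]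
  unfold Iα Cα
  ring

end PentagonSide

lemma goldenConj_sq_add_one_le_Iα {a1 a2 a3 : ℝ} (hC : Cα a1 a2 a3 = 0) :
    ψ ^ 2 + 1 ≤ Iα a1 a2 a3 := by
  have h_diag := goldenConj_sq_mul_sum_side_sq_le_sum_diagonal_sq (sum_pentagonSide a1 a2 a3)
  have h_inertia := five_mul_Iα a1 a2 a3
  rw [sum_norm_sq_pentagonSide, hC] at h_diag h_inertia
  linarith

lemma Iα_le_goldenRatio_sq_add_one {a1 a2 a3 : ℝ} (hC : Cα a1 a2 a3 = 0) :
    Iα a1 a2 a3 ≤ φ ^ 2 + 1 := by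
  have h_diag := sum_diagonal_sq_le_goldenRatio_sq_mul_sum_side_sq (sum_pentagonSide a1 a2 a3)
  have h_inertia := five_mul_Iα a1 a2 a3
  rw [sum_norm_sq_pentagonSide, hC] at h_diag h_inertia
  linarith

lemma cos_pi_div_five_eq_goldenRatio_div_two : cos (π / 5) = φ / 2 := by
  rw [cos_pi_div_five]
  ring

lemma cos_three_mul_pi_div_five : cos (3 * π / 5) = ψ / 2 := by
  have h_angle : 3 * π / 5 = π - 2 * (π / 5) := by ring
  rw [h_angle, cos_pi_sub, cos_two_mul, cos_pi_div_five_eq_goldenRatio_div_two]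
  linear_combination -goldenRatio_sq / 2 - goldenRatio_add_goldenConj / 2

lemma sin_three_mul_pi_div_five_mul_sin_pi_div_five :
    sin (3 * π / 5) * sin (π / 5) = (φ - ψ) / 4 := by
  have h_prod := two_mul_sin_mul_sin (3 * π / 5) (π / 5)
  have h_diff : 3 * π / 5 - π / 5 = π - 3 * π / 5 := by ring
  have h_sum : 3 * π / 5 + π / 5 = π - π / 5 := by ring
  rw [h_diff, h_sum, cos_pi_sub, cos_pi_sub, cos_three_mul_pi_div_five,
    cos_pi_div_five_eq_goldenRatio_div_two] at h_prod
  linarith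

lemma Cα_pentagram : Cα (3 * π / 5) (-π / 5) π = 0 := by
  unfold Cα
  rw [neg_div, cos_neg, cos_pi, cos_three_mul_pi_div_five, cos_pi_div_five_eq_goldenRatio_div_two]
  linear_combination goldenRatio_mul_goldenConj - 2 * goldenRatio_add_goldenConj

lemma Iα_pentagram : Iα (3 * π / 5) (-π / 5) π = ψ ^ 2 + 1 := by
  have h_sin := sin_three_mul_pi_div_five_mul_sin_pi_div_five
  unfold Iα
  rw [neg_div, cos_neg, sin_neg, cos_pi, cos_three_mul_pi_div_five,
    cos_pi_div_five_eq_goldenRatio_div_two]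
  linear_combination goldenRatio_mul_goldenConj / 2 - 3 / 2 * goldenRatio_add_goldenConj
    - 6 / 5 * h_sin - goldenConj_sq

lemma Cα_regular_pentagon : Cα (π / 5) (3 * π / 5) π = 0 := by
  unfold Cα
  rw [cos_pi, cos_three_mul_pi_div_five, cos_pi_div_five_eq_goldenRatio_div_two]
  linear_combination goldenRatio_mul_goldenConj - 2 * goldenRatio_add_goldenConj

lemma Iα_regular_pentagon : Iα (π / 5) (3 * π / 5) π = φ ^ 2 + 1 := by
  have h_sin := sin_three_mul_pi_div_five_mul_sin_pi_div_five
  unfold Iα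
  rw [cos_pi, cos_three_mul_pi_div_five, cos_pi_div_five_eq_goldenRatio_div_two]
  linear_combination goldenRatio_mul_goldenConj / 2 - 3 / 2 * goldenRatio_add_goldenConj
    + 6 / 5 * h_sin - goldenRatio_sq

/-- on the constraint surface `C = 0` the moment of inertia lies
between `(5 - √5)/2` and `(5 + √5)/2`, and both bounds are attained: the minimum
at the regular pentagram `(3π/5, -π/5, π)` and the maximum at the regular convex
pentagon `(π/5, 3π/5, π)`. -/
theorem moment_of_inertia_bounds :
    (∀ a1 a2 a3 : ℝ, Cα a1 a2 a3 = 0 →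
      (5 - Real.sqrt 5) / 2 ≤ Iα a1 a2 a3 ∧ Iα a1 a2 a3 ≤ (5 + Real.sqrt 5) / 2) ∧
    Cα (3 * π / 5) (-π / 5) π = 0 ∧ Iα (3 * π / 5) (-π / 5) π = (5 - Real.sqrt 5) / 2 ∧
    Cα (π / 5) (3 * π / 5) π = 0 ∧ Iα (π / 5) (3 * π / 5) π = (5 + Real.sqrt 5) / 2 := by
  have h_min : (5 - √5) / 2 = ψ ^ 2 + 1 := by rw [goldenConj_sq]; ring
  have h_max : (5 + √5) / 2 = φ ^ 2 + 1 := by rw [goldenRatio_sq]; ring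
  rw [h_min, h_max]
  exact ⟨fun _ _ _ hC ↦ ⟨goldenConj_sq_add_one_le_Iα hC, Iα_le_goldenRatio_sq_add_one hC⟩,
    Cα_pentagram, Iα_pentagram, Cα_regular_pentagon, Iα_regular_pentagon⟩
end

section
/- Let κ = arccos(7/8) and P = (0, 0, π − κ). Then C(P) = 0, I(P) = 5/2, and P is a critical point of I restricted to the surface C = 0 in the sense of Lagrange multipliers: the gradient of I at P equals (1/2) times the gradient of C at P, where the gradients are taken with respect to (α1, α2, α3). Moreover, for α1 = α2 = 0, C(0, 0, α3) = 0 holds if and only if cos α3 = −7/8. -/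
open Real

/-- The constraint as a function on `ℝ × ℝ × ℝ`. -/
noncomputable def Cfun (p : ℝ × ℝ × ℝ) : ℝ := Cα p.1 p.2.1 p.2.2

/-- The moment of inertia as a function on `ℝ × ℝ × ℝ`. -/
noncomputable def Ifun (p : ℝ × ℝ × ℝ) : ℝ := Iα p.1 p.2.1 p.2.2

/-!
Every monomial of `C` and `I` is even under `(α₁, α₂) ↦ (-α₁, -α₂)`, so on the axis `α₁ = α₂ = 0`
both gradients are multiples of `dα₃`. There `C = 7 + 8 cos α₃` and `I = 6 + 4 cos α₃`, so `I` and
`C / 2` differ by a constant along the axis: the multiplier is `1 / 2` at each of its points.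
-/

/-- The coordinate differential `dα₁` on `ℝ × ℝ × ℝ`. -/
def dα₁ : ℝ × ℝ × ℝ →L[ℝ] ℝ := .fst ℝ ℝ (ℝ × ℝ)

/-- The coordinate differential `dα₂` on `ℝ × ℝ × ℝ`. -/
def dα₂ : ℝ × ℝ × ℝ →L[ℝ] ℝ := .comp (.fst ℝ ℝ ℝ) (.snd ℝ ℝ (ℝ × ℝ))

/-- The coordinate differential `dα₃` on `ℝ × ℝ × ℝ`. -/
def dα₃ : ℝ × ℝ × ℝ →L[ℝ] ℝ := .comp (.snd ℝ ℝ ℝ) (.snd ℝ ℝ (ℝ × ℝ))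

section Gradients

variable (p : ℝ × ℝ × ℝ)

theorem hasFDerivAt_α₁ : HasFDerivAt (fun q : ℝ × ℝ × ℝ ↦ q.1) dα₁ p := dα₁.hasFDerivAt

theorem hasFDerivAt_α₂ : HasFDerivAt (fun q : ℝ × ℝ × ℝ ↦ q.2.1) dα₂ p := dα₂.hasFDerivAt

theorem hasFDerivAt_α₃ : HasFDerivAt (fun q : ℝ × ℝ × ℝ ↦ q.2.2) dα₃ p := dα₃.hasFDerivAt

theorem hasFDerivAt_Cfun :
    HasFDerivAt Cfun
      ((-4 * sin p.1 * (cos p.2.1 + cos p.2.2)) • dα₁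
        + (-4 * sin p.2.1 * (cos p.1 + cos p.2.2)) • dα₂
        + (-4 * sin p.2.2 * (cos p.1 + cos p.2.1)) • dα₃) p := by
  have cos₁ := (hasFDerivAt_α₁ p).cos
  have cos₂ := (hasFDerivAt_α₂ p).cos
  have cos₃ := (hasFDerivAt_α₃ p).cos
  have sum_rule := ((((cos₁.const_mul 4).mul cos₂).const_add 3).add
    ((cos₁.const_mul 4).mul cos₃)).add ((cos₂.const_mul 4).mul cos₃)
  refine sum_rule.congr_fderiv ?_
  module

theorem hasFDerivAt_Ifun :
    HasFDerivAt Ifun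
      ((6 / 5 * cos p.1 * sin p.2.1 - sin p.1 * (2 * cos p.2.1 + 8 / 5 * cos p.2.2)) • dα₁
        + (6 / 5 * sin p.1 * cos p.2.1 - sin p.2.1 * (2 * cos p.1 + 12 / 5 * cos p.2.2)) • dα₂
        + (-sin p.2.2 * (8 / 5 * cos p.1 + 12 / 5 * cos p.2.1)) • dα₃) p := by
  have cos₁ := (hasFDerivAt_α₁ p).cos
  have cos₂ := (hasFDerivAt_α₂ p).cos
  have cos₃ := (hasFDerivAt_α₃ p).cos
  have sin₁ := (hasFDerivAt_α₁ p).sin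
  have sin₂ := (hasFDerivAt_α₂ p).sin
  have sum_rule := (((((cos₁.const_mul 2).mul cos₂).const_add 4).add
    ((cos₁.const_mul (8 / 5)).mul cos₃)).add
    ((cos₂.const_mul (12 / 5)).mul cos₃)).add ((sin₁.const_mul (6 / 5)).mul sin₂)
  refine sum_rule.congr_fderiv ?_
  module

end Gradients

section Axis

variable (t : ℝ)

theorem Cα_zero_zero : Cα 0 0 t = 7 + 8 * cos t := by
  simp only [Cα, cos_zero]
  ring

theorem Iα_zero_zero : Iα 0 0 t = 6 + 4 * cos t := by
  simp only [Iα, cos_zero, sin_zero]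
  ring

theorem Cα_zero_zero_eq_zero_iff : Cα 0 0 t = 0 ↔ cos t = -(7 / 8) := by
  rw [Cα_zero_zero]
  constructor <;> intro h <;> linarith

theorem fderiv_Cfun_zero_zero : fderiv ℝ Cfun (0, 0, t) = (-8 * sin t) • dα₃ := by
  rw [(hasFDerivAt_Cfun (0, 0, t)).fderiv]
  simp only [cos_zero, sin_zero]
  module

theorem fderiv_Ifun_zero_zero : fderiv ℝ Ifun (0, 0, t) = (-4 * sin t) • dα₃ := by
  rw [(hasFDerivAt_Ifun (0, 0, t)).fderiv]
  simp only [cos_zero, sin_zero]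
  module

theorem fderiv_Ifun_zero_zero_eq_smul_fderiv_Cfun :
    fderiv ℝ Ifun (0, 0, t) = (1 / 2 : ℝ) • fderiv ℝ Cfun (0, 0, t) := by
  rw [fderiv_Ifun_zero_zero, fderiv_Cfun_zero_zero]
  module

end Axis

/-- with `κ = arccos(7/8)`, the point `P = (0, 0, π - κ)` lies on
the surface `C = 0`, has `I = 5/2`, and is a Lagrange critical point of `I` on
`{C = 0}`: `∇I(P) = (1/2) ∇C(P)`. Moreover `C(0,0,α₃) = 0 ↔ cos α₃ = -7/8`. -/
theorem saddle_point_of_inertia :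
    Cα 0 0 (π - Real.arccos (7 / 8)) = 0 ∧
    Iα 0 0 (π - Real.arccos (7 / 8)) = 5 / 2 ∧
    fderiv ℝ Ifun (0, 0, π - Real.arccos (7 / 8)) =
      (1 / 2 : ℝ) • fderiv ℝ Cfun (0, 0, π - Real.arccos (7 / 8)) ∧
    (∀ a3 : ℝ, Cα 0 0 a3 = 0 ↔ Real.cos a3 = -(7 / 8)) := by
  have hcos : cos (π - arccos (7 / 8)) = -(7 / 8) := by
    rw [← arccos_neg, cos_arccos (by norm_num) (by norm_num)]
  refine ⟨(Cα_zero_zero_eq_zero_iff _).2 hcos, ?_,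
    fderiv_Ifun_zero_zero_eq_smul_fderiv_Cfun _, Cα_zero_zero_eq_zero_iff⟩
  rw [Iα_zero_zero, hcos]
  norm_num
end

section
/- Let θ, α1, α2, α3 : ℝ → ℝ be differentiable functions of time t. Define ψ2 = π − α2 − α3, ψ3 = −α1 + α2 − π, ψ4 = π − α2 + α3 (as functions of t) and let z1(t),...,z5(t) be given by the vertex formulas. Then the angular momentum L(t) = Σ_{i=1}^{5} Im(conj(z_i(t)) · z_i'(t)) satisfies L = I·θ' + F̃1·α1' + F̃2·α2' + F̃3·α3', where I = 4 + 2cos α1 cos α2 + (8/5)cos α1 cos α3 + (12/5)cos α2 cos α3 + (6/5)sin α1 sin α2, F̃1 = 2 + cos α1 cos α2 + (4/5)cos α1 cos α3 + (6/5)cos α2 cos α3 + (3/5)sin α1 sin α2 + (6/5)sin α2 sin α3, F̃2 = 2 + cos α1 cos α2 + (4/5)cos α1 cos α3 + (6/5)cos α2 cos α3 + (3/5)sin α1 sin α2 + (4/5)sin α1 sin α3, and F̃3 = 12/5 + (8/5)cos α1 cos α2 + (4/5)cos α1 cos α3 + (6/5)cos α2 cos α3 + (8/5)sin α1 sin α2,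 all evaluated at (α1(t), α2(t), α3(t)). -/
open Real

/-- `eang x = e^{i x}` for a real angle `x`. -/
noncomputable def eang (x : ℝ) : ℂ := Complex.exp ((x : ℂ) * Complex.I)

/-- Vertex formula for `z₁`. -/
noncomputable def z1 (θ ψ2 ψ3 ψ4 : ℝ) : ℂ :=
  (1 / 5) * eang θ *
    (-4 + 3 * eang (-ψ2) - 2 * eang (-(ψ2 + ψ3)) + eang (-(ψ2 + ψ3 + ψ4)))

/-- Vertex formula for `z₂`. -/
noncomputable def z2 (θ ψ2 ψ3 ψ4 : ℝ) : ℂ :=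
  (1 / 5) * eang θ *
    (1 + 3 * eang (-ψ2) - 2 * eang (-(ψ2 + ψ3)) + eang (-(ψ2 + ψ3 + ψ4)))

/-- Vertex formula for `z₃`. -/
noncomputable def z3 (θ ψ2 ψ3 ψ4 : ℝ) : ℂ :=
  (1 / 5) * eang θ *
    (1 - 2 * eang (-ψ2) - 2 * eang (-(ψ2 + ψ3)) + eang (-(ψ2 + ψ3 + ψ4)))

/-- Vertex formula for `z₄`. -/
noncomputable def z4 (θ ψ2 ψ3 ψ4 : ℝ) : ℂ :=
  (1 / 5) * eang θ *
    (1 - 2 * eang (-ψ2) + 3 * eang (-(ψ2 + ψ3)) + eang (-(ψ2 + ψ3 + ψ4)))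

/-- Vertex formula for `z₅`. -/
noncomputable def z5 (θ ψ2 ψ3 ψ4 : ℝ) : ℂ :=
  (1 / 5) * eang θ *
    (1 - 2 * eang (-ψ2) + 3 * eang (-(ψ2 + ψ3)) - 4 * eang (-(ψ2 + ψ3 + ψ4)))

/-- First vertex as a function of time, with the shape given in `α`-coordinates. -/
noncomputable def Zf1 (θ a1 a2 a3 : ℝ → ℝ) (t : ℝ) : ℂ :=
  z1 (θ t) (π - a2 t - a3 t) (-a1 t + a2 t - π) (π - a2 t + a3 t)

/-- Second vertex as a function of time. -/
noncomputable def Zf2 (θ a1 a2 a3 : ℝ → ℝ) (t : ℝ) : ℂ :=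
  z2 (θ t) (π - a2 t - a3 t) (-a1 t + a2 t - π) (π - a2 t + a3 t)

/-- Third vertex as a function of time. -/
noncomputable def Zf3 (θ a1 a2 a3 : ℝ → ℝ) (t : ℝ) : ℂ :=
  z3 (θ t) (π - a2 t - a3 t) (-a1 t + a2 t - π) (π - a2 t + a3 t)

/-- Fourth vertex as a function of time. -/
noncomputable def Zf4 (θ a1 a2 a3 : ℝ → ℝ) (t : ℝ) : ℂ :=
  z4 (θ t) (π - a2 t - a3 t) (-a1 t + a2 t - π) (π - a2 t + a3 t)

/-- Fifth vertex as a function of time. -/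
noncomputable def Zf5 (θ a1 a2 a3 : ℝ → ℝ) (t : ℝ) : ℂ :=
  z5 (θ t) (π - a2 t - a3 t) (-a1 t + a2 t - π) (π - a2 t + a3 t)

/-- The angular momentum `L = Σ Im(conj zᵢ · zᵢ')` of the five unit masses. -/
noncomputable def Lmom (θ a1 a2 a3 : ℝ → ℝ) (t : ℝ) : ℝ :=
  ((starRingEnd ℂ) (Zf1 θ a1 a2 a3 t) * deriv (Zf1 θ a1 a2 a3) t).im
  + ((starRingEnd ℂ) (Zf2 θ a1 a2 a3 t) * deriv (Zf2 θ a1 a2 a3) t).im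
  + ((starRingEnd ℂ) (Zf3 θ a1 a2 a3 t) * deriv (Zf3 θ a1 a2 a3) t).im
  + ((starRingEnd ℂ) (Zf4 θ a1 a2 a3 t) * deriv (Zf4 θ a1 a2 a3) t).im
  + ((starRingEnd ℂ) (Zf5 θ a1 a2 a3 t) * deriv (Zf5 θ a1 a2 a3) t).im

/-- Coefficient `F̃₁`. -/
noncomputable def Ft1 (a1 a2 a3 : ℝ) : ℝ :=
  2 + Real.cos a1 * Real.cos a2 + (4 / 5) * Real.cos a1 * Real.cos a3
    + (6 / 5) * Real.cos a2 * Real.cos a3 + (3 / 5) * Real.sin a1 * Real.sin a2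
    + (6 / 5) * Real.sin a2 * Real.sin a3

/-- Coefficient `F̃₂`. -/
noncomputable def Ft2 (a1 a2 a3 : ℝ) : ℝ :=
  2 + Real.cos a1 * Real.cos a2 + (4 / 5) * Real.cos a1 * Real.cos a3
    + (6 / 5) * Real.cos a2 * Real.cos a3 + (3 / 5) * Real.sin a1 * Real.sin a2
    + (4 / 5) * Real.sin a1 * Real.sin a3

/-- Coefficient `F̃₃`. -/
noncomputable def Ft3 (a1 a2 a3 : ℝ) : ℝ :=
  12 / 5 + (8 / 5) * Real.cos a1 * Real.cos a2 + (4 / 5) * Real.cos a1 * Real.cos a3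
    + (6 / 5) * Real.cos a2 * Real.cos a3 + (8 / 5) * Real.sin a1 * Real.sin a2

/-!
Each `ψ` carries a `±π`, which flips the sign of every other exponential; after absorbing the signs,
the `zᵢ` are the vertices of a chain of four unit edges `e^{iβ₀}, …, e^{iβ₃}`, placed with its
centroid at the origin, where `β = θ + (0, α₂ + α₃, α₁ + α₃, α₁ + α₂)`.

For real `cⱼ`, the point `z = ∑ⱼ cⱼ e^{iβⱼ}` satisfies
`Im (conj z · z') = ∑ₖ (∑ⱼ cⱼ cₖ cos (βₖ - βⱼ)) βₖ'`. Summing over the vertices, the products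
`cⱼ cₖ` add up to the Gram matrix of the coefficients, which for a centred chain with `N` vertices
is `min j k - j k / N` (indices from `1`). The factor of `βₖ'` depends only on the differences of
the `βⱼ`, so `θ` drops out of it: `I` is the sum of the four factors, and each `F̃ᵢ` is the sum
of the two whose edge direction contains `αᵢ`.
-/

theorem eang_re (x : ℝ) : (eang x).re = cos x :=
  Complex.exp_ofReal_mul_I_re x

theorem eang_zero : eang 0 = 1 := by
  simp [eang]

theorem eang_add (x y : ℝ) : eang (x + y) = eang x * eang y := by
  simp only [eang, Complex.ofReal_add, add_mul, Complex.exp_add]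

theorem eang_sub_pi (x : ℝ) : eang (x - π) = -eang x := by
  simp only [eang, Complex.ofReal_sub, sub_mul, Complex.exp_sub_pi_mul_I]

theorem conj_eang (x : ℝ) : (starRingEnd ℂ) (eang x) = eang (-x) := by
  simp [eang, ← Complex.exp_conj]

theorem conj_eang_mul_eang (x y : ℝ) : (starRingEnd ℂ) (eang x) * eang y = eang (y - x) := by
  rw [conj_eang, ← eang_add, neg_add_eq_sub]

theorem hasDerivAt_eang_comp {β : ℝ → ℝ} {β' t : ℝ} (hβ : HasDerivAt β β' t) :
    HasDerivAt (fun s => eang (β s)) (eang (β t) * (β' * Complex.I)) t :=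
  (hβ.ofReal_comp.mul_const Complex.I).cexp

section AngularMomentum

variable {ι κ : Type*} [Fintype ι] [Fintype κ]

/-- The angular momentum about the origin, at time `t`, of a planar system of unit masses with
trajectories `z i`. It uses `deriv`, so it is meaningful only for `z i` differentiable at `t`. -/
noncomputable def angularMomentum (z : κ → ℝ → ℂ) (t : ℝ) : ℝ :=
  ∑ i, ((starRingEnd ℂ) (z i t) * deriv (z i) t).im

/-- The coefficient of the angular velocity `βₖ'` in the angular momentum of a system of real
combinations of the unit vectors `e^{iβⱼ}` whose coefficients have Gram matrix `G`. -/
noncomputable def phaseMomentum (G : Matrix ι ι ℝ) (β : ι → ℝ) (k : ι) : ℝ :=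
  ∑ j, G j k * cos (β k - β j)

theorem phaseMomentum_const_add (G : Matrix ι ι ℝ) (x : ℝ) (β : ι → ℝ) (k : ι) :
    phaseMomentum G (fun j => x + β j) k = phaseMomentum G β k := by
  simp only [phaseMomentum, add_sub_add_left_eq_sub]

variable {β : ι → ℝ → ℝ} {β' : ι → ℝ} {t : ℝ}

theorem im_conj_mul_deriv_sum_eang (c : ι → ℝ) (hβ : ∀ j, HasDerivAt (β j) (β' j) t) :
    ((starRingEnd ℂ) (∑ j, c j * eang (β j t)) *
        deriv (fun s => ∑ j, (c j : ℂ) * eang (β j s)) t).im =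
      ∑ k, ∑ j, c j * c k * cos (β k t - β j t) * β' k := by
  have hderiv : deriv (fun s => ∑ j, (c j : ℂ) * eang (β j s)) t =
      ∑ k, (c k : ℂ) * (eang (β k t) * (β' k * Complex.I)) :=
    (HasDerivAt.fun_sum fun k _ => (hasDerivAt_eang_comp (hβ k)).const_mul (c k : ℂ)).deriv
  have hterm (j k : ι) :
      (starRingEnd ℂ) (c j * eang (β j t)) * (c k * (eang (β k t) * (β' k * Complex.I))) =
        ((c j * c k * β' k : ℝ) : ℂ) * (eang (β k t - β j t) * Complex.I) := by
    rw [← conj_eang_mul_eang, map_mul, Complex.conj_ofReal]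
    push_cast
    ring
  rw [hderiv, map_sum, Finset.sum_mul_sum, Finset.sum_comm]
  simp only [hterm, Complex.im_sum, Complex.im_ofReal_mul, Complex.mul_I_im, eang_re]
  exact Finset.sum_congr rfl fun k _ => Finset.sum_congr rfl fun j _ => by ring

theorem angularMomentum_sum_eang (A : Matrix κ ι ℝ) (hβ : ∀ j, HasDerivAt (β j) (β' j) t) :
    angularMomentum (fun i s => ∑ j, (A i j : ℂ) * eang (β j s)) t =
      ∑ k, phaseMomentum (A.transpose * A) (fun j => β j t) k * β' k := by
  simp only [angularMomentum, im_conj_mul_deriv_sum_eang _ hβ, phaseMomentum, Matrix.mul_apply,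
    Matrix.transpose_apply, Finset.sum_mul]
  rw [Finset.sum_comm]
  exact Finset.sum_congr rfl fun k _ => Finset.sum_comm

end AngularMomentum

section CentredChain

/-- The coefficients of the vertices of a chain with `n` edges in terms of its edge vectors `uⱼ`,
when the centroid of the vertices is at the origin: with `P i = ∑_{j < i} uⱼ`, this is the
coefficient of `uⱼ` in `P i - (∑ₗ P l) / (n + 1)`. Edges and vertices are indexed from `0`. -/
noncomputable def centredChainCoeff (n : ℕ) : Matrix (Fin (n + 1)) (Fin n) ℝ :=
  .of fun i j => (j + 1) / (n + 1) - if i ≤ j.castSucc then 1 else 0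

theorem centredChainCoeff_transpose_mul_self (n : ℕ) (j k : Fin n) :
    ((centredChainCoeff n).transpose * centredChainCoeff n) j k =
      min (j + 1 : ℝ) (k + 1) - (j + 1) * (k + 1) / (n + 1) := by
  have hcount (l : Fin n) : ∑ i : Fin (n + 1), (if i ≤ l.castSucc then (1 : ℝ) else 0) = l + 1 := by
    simp [Finset.sum_boole, Finset.filter_ge_eq_Iic]
  have hprod (i : Fin (n + 1)) :
      (if i ≤ j.castSucc then (1 : ℝ) else 0) * (if i ≤ k.castSucc then 1 else 0) =
        if i ≤ (min j k).castSucc then 1 else 0 := by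
    simp only [ite_zero_mul_ite_zero, mul_one, ← le_inf_iff,
      Fin.strictMono_castSucc.monotone.map_inf]
  have hmin : ((min j k : Fin n) : ℝ) + 1 = min (j + 1 : ℝ) (k + 1) := by
    rw [Fin.coe_min, Nat.cast_min, min_add_add_right]
  simp only [Matrix.mul_apply, Matrix.transpose_apply, centredChainCoeff, Matrix.of_apply, sub_mul,
    mul_sub, Finset.sum_sub_distrib, ← Finset.mul_sum, ← Finset.sum_mul, hprod, hcount, hmin,
    Fin.sum_const, nsmul_eq_mul, Nat.cast_add, Nat.cast_one]
  field_simp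
  ring

theorem centredChainCoeff_four :
    centredChainCoeff 4 =
      !![-4 / 5, -3 / 5, -2 / 5, -1 / 5;
         1 / 5, -3 / 5, -2 / 5, -1 / 5;
         1 / 5, 2 / 5, -2 / 5, -1 / 5;
         1 / 5, 2 / 5, 3 / 5, -1 / 5;
         1 / 5, 2 / 5, 3 / 5, 4 / 5] := by
  ext i j
  fin_cases i <;> fin_cases j <;> norm_num [centredChainCoeff, Fin.le_def]

end CentredChain

/-- The directions of the four edges relative to the first one, as functions of the shape
coordinates `α`. -/
def shapeAngle (a1 a2 a3 : ℝ) : Fin 4 → ℝ :=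
  ![0, a2 + a3, a1 + a3, a1 + a2]

theorem vertices_eq_sum_centredChainCoeff (θ a1 a2 a3 : ℝ → ℝ) :
    ![Zf1 θ a1 a2 a3, Zf2 θ a1 a2 a3, Zf3 θ a1 a2 a3, Zf4 θ a1 a2 a3, Zf5 θ a1 a2 a3] =
      fun i s => ∑ j, (centredChainCoeff 4 i j : ℂ) *
        eang (θ s + shapeAngle (a1 s) (a2 s) (a3 s) j) := by
  have hψ2 (s : ℝ) : eang (-(π - a2 s - a3 s)) = -eang (a2 s + a3 s) := by
    rw [← eang_sub_pi]; ring_nf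
  have hψ23 (s : ℝ) : -(π - a2 s - a3 s + (-a1 s + a2 s - π)) = a1 s + a3 s := by ring
  have hψ234 (s : ℝ) : eang (-(π - a2 s - a3 s + (-a1 s + a2 s - π) + (π - a2 s + a3 s))) =
      -eang (a1 s + a2 s) := by
    rw [← eang_sub_pi]; ring_nf
  ext i s
  fin_cases i <;>
    simp only [Fin.zero_eta, Fin.mk_one, Fin.reduceFinMk, Matrix.cons_val, Zf1, Zf2, Zf3, Zf4, Zf5,
      z1, z2, z3, z4, z5, hψ2, hψ23, hψ234, Fin.sum_univ_four, eang_add (θ s), shapeAngle,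
      eang_zero, centredChainCoeff_four, Matrix.of_apply] <;>
    push_cast <;>
    ring

theorem Lmom_eq_angularMomentum (θ a1 a2 a3 : ℝ → ℝ) (t : ℝ) :
    Lmom θ a1 a2 a3 t =
      angularMomentum
        ![Zf1 θ a1 a2 a3, Zf2 θ a1 a2 a3, Zf3 θ a1 a2 a3, Zf4 θ a1 a2 a3, Zf5 θ a1 a2 a3] t := by
  simp [Lmom, angularMomentum, Fin.sum_univ_five]

theorem hasDerivAt_shapeAngle {a1 a2 a3 : ℝ → ℝ} {a1' a2' a3' t : ℝ}
    (h1 : HasDerivAt a1 a1' t) (h2 : HasDerivAt a2 a2' t) (h3 : HasDerivAt a3 a3' t) (j : Fin 4) :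
    HasDerivAt (fun s => shapeAngle (a1 s) (a2 s) (a3 s) j) (shapeAngle a1' a2' a3' j) t := by
  fin_cases j
  exacts [hasDerivAt_const t 0, h2.add h3, h1.add h3, h1.add h2]

/-- The factors of the angular velocities of the four edges in the angular momentum of the centred
chain of shape `α`. -/
noncomputable def edgeMomentum (a1 a2 a3 : ℝ) : Fin 4 → ℝ :=
  phaseMomentum ((centredChainCoeff 4).transpose * centredChainCoeff 4) (shapeAngle a1 a2 a3)

theorem edgeMomentum_eq (a1 a2 a3 : ℝ) :
    edgeMomentum a1 a2 a3 =
      ![4 / 5 + 3 / 5 * cos (a2 + a3) + 2 / 5 * cos (a1 + a3) + 1 / 5 * cos (a1 + a2),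
        3 / 5 * cos (a2 + a3) + 6 / 5 + 4 / 5 * cos (a2 - a1) + 2 / 5 * cos (a3 - a1),
        2 / 5 * cos (a1 + a3) + 4 / 5 * cos (a1 - a2) + 6 / 5 + 3 / 5 * cos (a3 - a2),
        1 / 5 * cos (a1 + a2) + 2 / 5 * cos (a1 - a3) + 3 / 5 * cos (a2 - a3) + 4 / 5] := by
  have h13 : a1 + a2 - (a2 + a3) = a1 - a3 := by ring
  have h31 : a2 + a3 - (a1 + a2) = a3 - a1 := by ring
  ext k
  fin_cases k <;>
    simp only [edgeMomentum, phaseMomentum, centredChainCoeff_transpose_mul_self, shapeAngle,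
      Fin.sum_univ_four, Fin.zero_eta, Fin.mk_one, Fin.reduceFinMk, Matrix.cons_val, zero_sub,
      sub_zero, cos_neg] <;>
    norm_num [h13, h31]

theorem Iα_eq_sum_edgeMomentum (a1 a2 a3 : ℝ) : Iα a1 a2 a3 = ∑ k, edgeMomentum a1 a2 a3 k := by
  simp only [Iα, edgeMomentum_eq, Fin.sum_univ_four, Matrix.cons_val, cos_add, cos_sub]
  ring

theorem Ft1_eq_edgeMomentum_add (a1 a2 a3 : ℝ) :
    Ft1 a1 a2 a3 = edgeMomentum a1 a2 a3 2 + edgeMomentum a1 a2 a3 3 := by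
  simp only [Ft1, edgeMomentum_eq, Matrix.cons_val, cos_add, cos_sub]
  ring

theorem Ft2_eq_edgeMomentum_add (a1 a2 a3 : ℝ) :
    Ft2 a1 a2 a3 = edgeMomentum a1 a2 a3 1 + edgeMomentum a1 a2 a3 3 := by
  simp only [Ft2, edgeMomentum_eq, Matrix.cons_val, cos_add, cos_sub]
  ring

theorem Ft3_eq_edgeMomentum_add (a1 a2 a3 : ℝ) :
    Ft3 a1 a2 a3 = edgeMomentum a1 a2 a3 1 + edgeMomentum a1 a2 a3 2 := by
  simp only [Ft3, edgeMomentum_eq, Matrix.cons_val, cos_add, cos_sub]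
  ring

theorem Lmom_eq_sum_edgeMomentum {θ a1 a2 a3 : ℝ → ℝ} {θ' a1' a2' a3' t : ℝ}
    (hθ : HasDerivAt θ θ' t) (h1 : HasDerivAt a1 a1' t) (h2 : HasDerivAt a2 a2' t)
    (h3 : HasDerivAt a3 a3' t) :
    Lmom θ a1 a2 a3 t =
      ∑ k, edgeMomentum (a1 t) (a2 t) (a3 t) k * (θ' + shapeAngle a1' a2' a3' k) := by
  rw [Lmom_eq_angularMomentum, vertices_eq_sum_centredChainCoeff,
    angularMomentum_sum_eang _ fun j => hθ.fun_add (hasDerivAt_shapeAngle h1 h2 h3 j)]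
  simp only [phaseMomentum_const_add, edgeMomentum]

theorem angular_momentum_decomposition_general {θ a1 a2 a3 : ℝ → ℝ} {θ' a1' a2' a3' t : ℝ}
    (hθ : HasDerivAt θ θ' t) (h1 : HasDerivAt a1 a1' t) (h2 : HasDerivAt a2 a2' t)
    (h3 : HasDerivAt a3 a3' t) :
    Lmom θ a1 a2 a3 t =
      Iα (a1 t) (a2 t) (a3 t) * θ'
      + Ft1 (a1 t) (a2 t) (a3 t) * a1'
      + Ft2 (a1 t) (a2 t) (a3 t) * a2'
      + Ft3 (a1 t) (a2 t) (a3 t) * a3' := by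
  rw [Lmom_eq_sum_edgeMomentum hθ h1 h2 h3, Iα_eq_sum_edgeMomentum, Ft1_eq_edgeMomentum_add,
    Ft2_eq_edgeMomentum_add, Ft3_eq_edgeMomentum_add]
  simp only [shapeAngle, Fin.sum_univ_four, Matrix.cons_val]
  ring

/-- along any differentiable motion, the angular momentum decomposes
as `L = I θ' + F̃₁ α₁' + F̃₂ α₂' + F̃₃ α₃'`. -/
theorem angular_momentum_decomposition (θ a1 a2 a3 : ℝ → ℝ)
    (hθ : Differentiable ℝ θ) (h1 : Differentiable ℝ a1)
    (h2 : Differentiable ℝ a2) (h3 : Differentiable ℝ a3) (t : ℝ) :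
    Lmom θ a1 a2 a3 t =
      Iα (a1 t) (a2 t) (a3 t) * deriv θ t
      + Ft1 (a1 t) (a2 t) (a3 t) * deriv a1 t
      + Ft2 (a1 t) (a2 t) (a3 t) * deriv a2 t
      + Ft3 (a1 t) (a2 t) (a3 t) * deriv a3 t := by
  exact angular_momentum_decomposition_general (hθ t).hasDerivAt (h1 t).hasDerivAt
    (h2 t).hasDerivAt (h3 t).hasDerivAt
end

section
/- Let p_s = arccos(3√3/(4√2)). For every t ∈ [−p_s, p_s]: cos²t − 3/4 ≥ 0; the quantity χ(t) = −cos t + √(cos²t − 3/4) lies in the open interval (−1, 0); and the point (arccos χ(t), arccos χ(t), −t) lies on the shape-space surface, i.e. C(arccos χ(t), arccos χ(t), −t) = 0. -/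
open Real

/-- `χ(t) = -cos t + √(cos²t - 3/4)`. -/
noncomputable def chi (t : ℝ) : ℝ := -Real.cos t + Real.sqrt (Real.cos t ^ 2 - 3 / 4)

/-!
With `c = cos t`, the surface equation at a point `(arccos x, arccos x, -t)` is the quadratic
`4 x ^ 2 + 8 c x + 3 = 0`, and `chi t` is its larger root. The roots are real and negative exactly
when `√3 / 2 ≤ c`, which holds on all of `[-π / 6, π / 6]` and hence on the smaller interval
`[-p_s, p_s]`. The larger root is at least `-c`, so it exceeds `-1` when `c < 1`, and for `c = 1` it
is `-1 / 2`.
-/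

lemma Cα_self_left (a b : ℝ) : Cα a a b = 4 * cos a ^ 2 + 8 * cos b * cos a + 3 := by
  unfold Cα
  ring

lemma chi_quadratic_eq_zero {t : ℝ} (h : 0 ≤ cos t ^ 2 - 3 / 4) :
    4 * chi t ^ 2 + 8 * cos t * chi t + 3 = 0 := by
  unfold chi
  linear_combination 4 * sq_sqrt h

lemma neg_one_lt_chi (t : ℝ) : -1 < chi t := by
  unfold chi
  rcases (cos_le_one t).lt_or_eq with hlt | heq
  · linarith [sqrt_nonneg (cos t ^ 2 - 3 / 4)]
  · have hsqrt : 0 < √(cos t ^ 2 - 3 / 4) := sqrt_pos.2 (by norm_num [heq])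
    linarith

lemma chi_neg_of_cos_pos {t : ℝ} (h : 0 < cos t) : chi t < 0 := by
  have hsqrt : √(cos t ^ 2 - 3 / 4) < cos t := (sqrt_lt' h).2 (by linarith)
  unfold chi
  linarith

lemma sqrt_three_div_two_le_cos {t : ℝ} (ht : |t| ≤ π / 6) : √3 / 2 ≤ cos t := by
  rw [← cos_pi_div_six, ← cos_abs t]
  exact cos_le_cos_of_nonneg_of_le_pi (abs_nonneg t) (by linarith [pi_pos]) ht

lemma arccos_three_sqrt_three_div_four_sqrt_two_le_pi_div_six :
    arccos (3 * √3 / (4 * √2)) ≤ π / 6 := by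
  have hsqrt_two : √2 ≤ 3 / 2 := sqrt_le_iff.2 (by norm_num)
  have hle : √3 / 2 ≤ 3 * √3 / (4 * √2) := by
    rw [div_le_div_iff₀ (by positivity) (by positivity)]
    nlinarith [sqrt_nonneg 3]
  calc
    arccos (3 * √3 / (4 * √2)) ≤ arccos (√3 / 2) := arccos_le_arccos hle
    _ = π / 6 := by
      rw [← cos_pi_div_six, arccos_cos (by positivity) (by linarith [pi_pos])]

theorem convexity_boundary_curve_general (t : ℝ) (ht : √3 / 2 ≤ cos t) :
    0 ≤ cos t ^ 2 - 3 / 4 ∧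
    chi t ∈ Set.Ioo (-1 : ℝ) 0 ∧
    Cα (arccos (chi t)) (arccos (chi t)) (-t) = 0 := by
  have hcos_pos : 0 < cos t := lt_of_lt_of_le (by positivity) ht
  have hdisc : 0 ≤ cos t ^ 2 - 3 / 4 := by
    have hsq : (√3 / 2) ^ 2 ≤ cos t ^ 2 := by gcongr
    rw [div_pow, sq_sqrt (by norm_num)] at hsq
    linarith
  have hlower := neg_one_lt_chi t
  have hupper := chi_neg_of_cos_pos hcos_pos
  refine ⟨hdisc, ⟨hlower, hupper⟩, ?_⟩
  rw [Cα_self_left, cos_arccos hlower.le (by linarith), cos_neg]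
  exact chi_quadratic_eq_zero hdisc

/-- with `p_s = arccos(3√3/(4√2))`, for every `t ∈ [-p_s, p_s]` one
has `cos²t - 3/4 ≥ 0`, `χ(t) ∈ (-1, 0)`, and the point
`(arccos χ(t), arccos χ(t), -t)` lies on the shape-space surface `C = 0`. -/
theorem convexity_boundary_curve (t : ℝ)
    (ht : t ∈ Set.Icc (-Real.arccos (3 * Real.sqrt 3 / (4 * Real.sqrt 2)))
                      (Real.arccos (3 * Real.sqrt 3 / (4 * Real.sqrt 2)))) :
    0 ≤ Real.cos t ^ 2 - 3 / 4 ∧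
    chi t ∈ Set.Ioo (-1 : ℝ) 0 ∧
    Cα (Real.arccos (chi t)) (Real.arccos (chi t)) (-t) = 0 := by
  exact convexity_boundary_curve_general t (sqrt_three_div_two_le_cos
    ((abs_le.2 ht).trans arccos_three_sqrt_three_div_four_sqrt_two_le_pi_div_six))
end

section
/- Let ψ2, ψ3, ψ4 be reals with ψ2 = ψ4. Define ψ5 = −Arg(1 − e^{iψ4} + e^{i(ψ3+ψ4)} − e^{i(ψ2+ψ3+ψ4)}) and ψ1 = Arg(1 − e^{−iψ2} + e^{−i(ψ2+ψ3)} − e^{−i(ψ2+ψ3+ψ4)}). Then ψ1 ≡ ψ5 (mod 2π). (Thus shapes with ψ2 = ψ4 are reflection-symmetric: ψ1 = ψ5 and ψ2 = ψ4.) -/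
open Real

open ComplexConjugate

theorem eang_neg (x : ℝ) : eang (-x) = conj (eang x) := by
  simp [eang, ← Complex.exp_conj]

/-- The endpoint of a chain of four unit sides that starts at `0` in direction `1` and has relative
angles `α`, `β`, `γ` at its inner vertices. The signs alternate because each side is the reversed
previous side rotated by the relative angle. The remaining relative angles of an equilateral
pentagon are read off from the argument of this endpoint. -/
noncomputable def chainEndpoint (α β γ : ℝ) : ℂ :=
  1 - eang α + eang (α + β) - eang (α + β + γ)

theorem chainEndpoint_neg (α β γ : ℝ) :
    chainEndpoint (-α) (-β) (-γ) = conj (chainEndpoint α β γ) := by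
  simp only [chainEndpoint, ← neg_add, eang_neg, map_sub, map_add, map_one]

theorem coe_arg_chainEndpoint_neg (α β γ : ℝ) :
    (Complex.arg (chainEndpoint (-α) (-β) (-γ)) : Angle) =
      ((-Complex.arg (chainEndpoint α β γ) : ℝ) : Angle) := by
  rw [chainEndpoint_neg, Complex.arg_conj_coe_angle, Angle.coe_neg]

/-- if `ψ₂ = ψ₄` then the derived relative angles
`ψ₁ = Arg(1 - e^{-iψ₂} + e^{-i(ψ₂+ψ₃)} - e^{-i(ψ₂+ψ₃+ψ₄)})` and
`ψ₅ = -Arg(1 - e^{iψ₄} + e^{i(ψ₃+ψ₄)} - e^{i(ψ₂+ψ₃+ψ₄)})` agree modulo `2π`;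
such shapes are reflection symmetric. -/
theorem reflection_symmetric_shape (ψ2 ψ3 ψ4 : ℝ) (h : ψ2 = ψ4) :
    ∃ k : ℤ,
      Complex.arg (1 - eang (-ψ2) + eang (-(ψ2 + ψ3)) - eang (-(ψ2 + ψ3 + ψ4)))
        - -Complex.arg (1 - eang ψ4 + eang (ψ3 + ψ4) - eang (ψ2 + ψ3 + ψ4))
        = 2 * π * k := by
  subst h
  have hψ := coe_arg_chainEndpoint_neg ψ2 ψ3 ψ2
  rw [Angle.angle_eq_iff_two_pi_dvd_sub] at hψ
  simpa only [chainEndpoint, neg_add, add_comm ψ3 ψ2] using hψ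
end
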